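/- arXiv:2205.02961 — 4 statements merged into one kernel-verified Lean document; each statement's English description precedes it below -/
import Mathlib

section
/- Let S be a nonempty compact subset of EuclideanSpace ℝ (Fin 3) that is solid, i.e. S = closure (interior S). Then √2 · max(H_b(S), R_v(S)) ≥ max(H_b(S), H_i(S)). -/
open Metric MeasureTheory

noncomputable def Hb (S : Set (EuclideanSpace ℝ (Fin 3))) : ℝ :=
  Metric.hausdorffDist (frontier S) (frontier (convexHull ℝ S))

noncomputable def Hi (S : Set (EuclideanSpace ℝ (Fin 3))) : ℝ :=
  Metric.hausdorffDist S (convexHull ℝ S)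

noncomputable def Rv (S : Set (EuclideanSpace ℝ (Fin 3))) : ℝ :=
  (3 * ((volume (convexHull ℝ S)).toReal - (volume S).toReal) / (4 * Real.pi)) ^ ((1 : ℝ) / 3)

/-!
Let `S ⊆ K` with `K` convex, let `x ∈ K` be at distance `d` from `S`, and let `y ∈ ∂K` be a point
closest to `x` outside `K`, at distance `r`. The ball of radius `r` about `x` lies in `K`, so the
hyperplane through `y` orthogonal to `y - x` supports `K`. Hence a point `s ∈ ∂S` closest to `y`
sees the segment from `x` to `y` under a non-acute angle at `y`, and Pythagoras gives
`d ^ 2 ≤ r ^ 2 + H_b ^ 2`. On the other hand the ball of radius `min d r` about `x` lies in `K` and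
misses `S`, so `min d r ≤ R_v`. In either case `d ^ 2 ≤ H_b ^ 2 + R_v ^ 2`.
-/

open Module
open scoped RealInnerProductSpace

theorem max_le_sqrt_two_mul_max_of_le_sqrt {a b c : ℝ} (ha : 0 ≤ a) (hb : 0 ≤ b)
    (hc : c ≤ √(a ^ 2 + b ^ 2)) : max a c ≤ √2 * max a b := by
  have hm : 0 ≤ max a b := le_max_of_le_left ha
  refine max_le ?_ ?_
  · calc a ≤ max a b := le_max_left a b
      _ ≤ √2 * max a b := le_mul_of_one_le_left hm (Real.one_le_sqrt.2 one_le_two)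
  · calc c ≤ √(a ^ 2 + b ^ 2) := hc
      _ ≤ √(max a b ^ 2 + max a b ^ 2) := by gcongr <;> simp
      _ = √2 * max a b := by rw [← two_mul, Real.sqrt_mul zero_le_two, Real.sqrt_sq hm]

theorem nonempty_frontier_of_isBounded {E : Type*} [NormedAddCommGroup E] [NormedSpace ℝ E]
    [Nontrivial E] {s : Set E} (hs : Bornology.IsBounded s) (hne : s.Nonempty) :
    (frontier s).Nonempty :=
  nonempty_frontier_iff.2 ⟨hne, fun h => NormedSpace.unbounded_univ ℝ E (h ▸ hs)⟩

theorem isBounded_frontier {X : Type*} [PseudoMetricSpace X] {s : Set X}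
    (hs : Bornology.IsBounded s) : Bornology.IsBounded (frontier s) :=
  hs.closure.subset frontier_subset_closure

section BallRadius

variable {E : Type*} [NormedAddCommGroup E] [NormedSpace ℝ E] [MeasurableSpace E]

/-- The radius of a ball of volume `v` with respect to a Haar measure `μ` on a finite-dimensional
space; it measures the volume of `K \ S` as a length. Meaningful for `0 ≤ v` and `0 < dim E`. -/
noncomputable def ballRadius (μ : Measure E) (v : ℝ) : ℝ :=
  (v / μ.real (ball (0 : E) 1)) ^ (finrank ℝ E : ℝ)⁻¹

theorem ballRadius_nonneg (μ : Measure E) {v : ℝ} (hv : 0 ≤ v) : 0 ≤ ballRadius μ v := by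
  unfold ballRadius
  positivity

variable [BorelSpace E] [FiniteDimensional ℝ E] [Nontrivial E]
  (μ : Measure E) [μ.IsAddHaarMeasure]

theorem le_ballRadius_of_measureReal_ball_le {x : E} {r v : ℝ} (hr : 0 ≤ r)
    (h : μ.real (ball x r) ≤ v) : r ≤ ballRadius μ v := by
  have hunit : 0 < μ.real (ball (0 : E) 1) :=
    ENNReal.toReal_pos (measure_ball_pos μ 0 one_pos).ne' measure_ball_lt_top.ne
  have hball : μ.real (ball x r) = r ^ finrank ℝ E * μ.real (ball (0 : E) 1) := by
    rw [measureReal_def, Measure.addHaar_ball μ x hr, ENNReal.toReal_mul,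
      ENNReal.toReal_ofReal (by positivity), measureReal_def]
  calc r = (r ^ finrank ℝ E) ^ (finrank ℝ E : ℝ)⁻¹ :=
        (Real.pow_rpow_inv_natCast hr finrank_pos.ne').symm
    _ ≤ (v / μ.real (ball (0 : E) 1)) ^ (finrank ℝ E : ℝ)⁻¹ := by
        gcongr
        rwa [le_div_iff₀ hunit, ← hball]

theorem le_ballRadius_of_ball_subset_of_disjoint {S K : Set E} {x : E} {r : ℝ} (hr : 0 ≤ r)
    (hSK : S ⊆ K) (hK : Bornology.IsBounded K) (hball : ball x r ⊆ K)
    (hdisj : Disjoint (ball x r) S) : r ≤ ballRadius μ (μ.real K - μ.real S) := by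
  refine le_ballRadius_of_measureReal_ball_le μ hr (x := x) (le_sub_iff_add_le.2 ?_)
  calc μ.real (ball x r) + μ.real S
      = μ.real (ball x r ∪ S) := (measureReal_union' hdisj measurableSet_ball
          measure_ball_lt_top.ne (hK.subset hSK).measure_lt_top.ne).symm
    _ ≤ μ.real K := measureReal_mono (Set.union_subset hball hSK) hK.measure_lt_top.ne

theorem min_infDist_infDist_compl_le_ballRadius {S K : Set E} (x : E)
    (hSK : S ⊆ K) (hK : Bornology.IsBounded K) :
    min (infDist x S) (infDist x Kᶜ) ≤ ballRadius μ (μ.real K - μ.real S) :=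
  le_ballRadius_of_ball_subset_of_disjoint μ (le_min infDist_nonneg infDist_nonneg) hSK hK
    ((ball_subset_ball (min_le_right _ _)).trans ball_infDist_compl_subset)
    (disjoint_ball_infDist.mono_left (ball_subset_ball (min_le_left _ _)))

end BallRadius

section Convex

variable {E : Type*} [NormedAddCommGroup E] [InnerProductSpace ℝ E]

theorem exists_pos_norm_sub_smul_lt_of_inner_pos {u v : E} (h : 0 < ⟪u, v⟫) :
    ∃ t : ℝ, 0 < t ∧ ‖v - t • u‖ < ‖v‖ := by
  have hu : 0 < ‖u‖ ^ 2 := by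
    have : u ≠ 0 := by
      rintro rfl
      simp at h
    positivity
  -- this `t • u` is the orthogonal projection of `v` onto the line spanned by `u`
  refine ⟨⟪u, v⟫ / ‖u‖ ^ 2, by positivity, lt_of_pow_lt_pow_left₀ 2 (norm_nonneg v) ?_⟩
  have hsq : ‖v - (⟪u, v⟫ / ‖u‖ ^ 2) • u‖ ^ 2 = ‖v‖ ^ 2 - ⟪u, v⟫ ^ 2 / ‖u‖ ^ 2 := by
    rw [norm_sub_sq_real, inner_smul_right, norm_smul, mul_pow, Real.norm_eq_abs, sq_abs,
      real_inner_comm]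
    field_simp
    ring
  rw [hsq]
  exact sub_lt_self _ (by positivity)

variable {K : Set E} {x y s : E}

theorem inner_sub_sub_nonpos_of_ball_subset (hK : Convex ℝ K) (hball : ball x (dist x y) ⊆ K)
    (hy : y ∉ interior K) (hs : s ∈ closure K) : ⟪s - y, y - x⟫ ≤ 0 := by
  by_contra! hpos
  obtain ⟨t, ht, hlt⟩ := exists_pos_norm_sub_smul_lt_of_inner_pos hpos
  have hmem : y - t • (s - y) ∈ ball x (dist x y) := by
    rwa [mem_ball, dist_comm x y, dist_eq_norm, dist_eq_norm, sub_right_comm]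
  have hint : y - t • (s - y) ∈ interior K := interior_maximal hball isOpen_ball hmem
  refine hy (hK.openSegment_interior_closure_subset_interior hint hs ?_)
  refine ⟨1 / (1 + t), t / (1 + t), by positivity, by positivity, by field_simp, ?_⟩
  match_scalars <;> field_simp <;> ring

theorem dist_sq_le_of_ball_subset (hK : Convex ℝ K) (hball : ball x (dist x y) ⊆ K)
    (hy : y ∉ interior K) (hs : s ∈ closure K) :
    dist x s ^ 2 ≤ dist x y ^ 2 + dist y s ^ 2 := by
  have hinner := inner_sub_sub_nonpos_of_ball_subset hK hball hy hs
  calc dist x s ^ 2 = ‖(s - y) + (y - x)‖ ^ 2 := by rw [sub_add_sub_cancel, dist_eq_norm']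
    _ = ‖s - y‖ ^ 2 + 2 * ⟪s - y, y - x⟫ + ‖y - x‖ ^ 2 := norm_add_sq_real _ _
    _ ≤ ‖y - x‖ ^ 2 + ‖s - y‖ ^ 2 := by linarith
    _ = dist x y ^ 2 + dist y s ^ 2 := by rw [dist_eq_norm' x y, dist_eq_norm' y s]

variable [FiniteDimensional ℝ E] [Nontrivial E] {S : Set E}

theorem infDist_sq_le_infDist_compl_sq_add_hausdorffDist_frontier_sq (hK : Convex ℝ K)
    (hKb : Bornology.IsBounded K) (hSK : S ⊆ K) (hS : S.Nonempty) (hx : x ∈ K) :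
    infDist x S ^ 2 ≤ infDist x Kᶜ ^ 2 + hausdorffDist (frontier S) (frontier K) ^ 2 := by
  have hSb : Bornology.IsBounded S := hKb.subset hSK
  have hSf : (frontier S).Nonempty := nonempty_frontier_of_isBounded hSb hS
  have hKf : (frontier K).Nonempty := nonempty_frontier_of_isBounded hKb ⟨x, hx⟩
  obtain ⟨y, hy, hxy⟩ :=
    exists_mem_frontier_infDist_compl_eq_dist hx (nonempty_frontier_iff.1 hKf).2
  obtain ⟨s, hs, hys⟩ := isClosed_frontier.exists_infDist_eq_dist hSf y
  have hball : ball x (dist x y) ⊆ K := hxy ▸ ball_infDist_compl_subset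
  have hsS : s ∈ closure S := frontier_subset_closure hs
  have hxs : infDist x S ≤ dist x s := infDist_closure (s := S) ▸ infDist_le_dist_of_mem hsS
  have hdist : dist y s ≤ hausdorffDist (frontier S) (frontier K) := by
    rw [← hys, hausdorffDist_comm]
    exact infDist_le_hausdorffDist_of_mem hy <|
      hausdorffEDist_ne_top_of_nonempty_of_bounded hKf hSf
        (isBounded_frontier hKb) (isBounded_frontier hSb)
  calc infDist x S ^ 2 ≤ dist x s ^ 2 := by gcongr; exact infDist_nonneg
    _ ≤ dist x y ^ 2 + dist y s ^ 2 :=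
        dist_sq_le_of_ball_subset hK hball hy.2 (closure_mono hSK hsS)
    _ ≤ infDist x Kᶜ ^ 2 + hausdorffDist (frontier S) (frontier K) ^ 2 := by
        rw [hxy]
        gcongr

variable [MeasurableSpace E] [BorelSpace E] (μ : Measure E) [μ.IsAddHaarMeasure]

theorem hausdorffDist_le_sqrt_hausdorffDist_frontier_sq_add_ballRadius_sq (hK : Convex ℝ K)
    (hKb : Bornology.IsBounded K) (hSK : S ⊆ K) (hS : S.Nonempty) :
    hausdorffDist S K ≤ √(hausdorffDist (frontier S) (frontier K) ^ 2 +
      ballRadius μ (μ.real K - μ.real S) ^ 2) := by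
  refine hausdorffDist_le_of_infDist (Real.sqrt_nonneg _)
    (fun x hx => (infDist_zero_of_mem (hSK hx)).trans_le (Real.sqrt_nonneg _)) fun x hx => ?_
  refine Real.le_sqrt_of_sq_le ?_
  have hmin := min_infDist_infDist_compl_le_ballRadius μ x hSK hKb
  rcases le_total (infDist x S) (infDist x Kᶜ) with hle | hle
  · rw [min_eq_left hle] at hmin
    exact le_add_of_nonneg_of_le (sq_nonneg _) (pow_le_pow_left₀ infDist_nonneg hmin 2)
  · rw [min_eq_right hle] at hmin
    calc infDist x S ^ 2
        ≤ infDist x Kᶜ ^ 2 + hausdorffDist (frontier S) (frontier K) ^ 2 :=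
          infDist_sq_le_infDist_compl_sq_add_hausdorffDist_frontier_sq hK hKb hSK hS hx
      _ ≤ ballRadius μ (μ.real K - μ.real S) ^ 2 +
          hausdorffDist (frontier S) (frontier K) ^ 2 := by gcongr; exact infDist_nonneg
      _ = _ := add_comm _ _

theorem sqrt_two_mul_max_Hb_Rv_ge_general (hK : Convex ℝ K) (hKb : Bornology.IsBounded K)
    (hSK : S ⊆ K) (hS : S.Nonempty) :
    √2 * max (hausdorffDist (frontier S) (frontier K)) (ballRadius μ (μ.real K - μ.real S)) ≥
      max (hausdorffDist (frontier S) (frontier K)) (hausdorffDist S K) :=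
  max_le_sqrt_two_mul_max_of_le_sqrt hausdorffDist_nonneg
    (ballRadius_nonneg μ (sub_nonneg.2 (measureReal_mono hSK hKb.measure_lt_top.ne)))
    (hausdorffDist_le_sqrt_hausdorffDist_frontier_sq_add_ballRadius_sq μ hK hKb hSK hS)

end Convex

theorem Rv_eq_ballRadius (S : Set (EuclideanSpace ℝ (Fin 3))) :
    Rv S = ballRadius (volume : Measure (EuclideanSpace ℝ (Fin 3)))
      (volume.real (convexHull ℝ S) - volume.real S) := by
  have hunit : (volume : Measure (EuclideanSpace ℝ (Fin 3))).real (ball 0 1) = 4 * Real.pi / 3 := by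
    rw [measureReal_def, EuclideanSpace.volume_ball_fin_three, ENNReal.ofReal_one, one_pow,
      one_mul, ENNReal.toReal_ofReal (by positivity), mul_comm]
  rw [Rv, ballRadius, hunit, finrank_euclideanSpace_fin, measureReal_def, measureReal_def,
    div_div_eq_mul_div, mul_comm (3 : ℝ), one_div, Nat.cast_ofNat]

theorem sqrt_two_mul_max_Hb_Rv_ge (S : Set (EuclideanSpace ℝ (Fin 3)))
    (hne : S.Nonempty) (hcomp : IsCompact S) (hsolid : S = closure (interior S)) :
    Real.sqrt 2 * max (Hb S) (Rv S) ≥ max (Hb S) (Hi S) := by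
  rw [Rv_eq_ballRadius]
  exact sqrt_two_mul_max_Hb_Rv_ge_general volume (convex_convexHull ℝ S)
    (isBounded_convexHull.2 hcomp.isBounded) (subset_convexHull ℝ S) hne
end

section
/- Let S be a nonempty compact subset of EuclideanSpace ℝ (Fin 3) and let q ∈ convexHull ℝ S satisfy Metric.infDist q S ≤ Metric.infDist q ((convexHull ℝ S)ᶜ). Then Metric.infDist q S ≤ R_v(S). -/
open Metric MeasureTheory

theorem measureReal_ball_infDist_le_sub {X : Type*} [PseudoMetricSpace X] [MeasurableSpace X]
    [OpensMeasurableSpace X] {μ : Measure X} {S K : Set X} {q : X} (hSK : S ⊆ K)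
    (hK : μ K ≠ ⊤) (hle : infDist q S ≤ infDist q Kᶜ) :
    μ.real (ball q (infDist q S)) ≤ μ.real K - μ.real S := by
  have hball : ball q (infDist q S) ⊆ K :=
    (ball_subset_ball hle).trans ball_infDist_compl_subset
  have hunion : μ.real (ball q (infDist q S) ∪ S) =
      μ.real (ball q (infDist q S)) + μ.real S :=
    measureReal_union' disjoint_ball_infDist measurableSet_ball
      (measure_ne_top_of_subset hball hK) (measure_ne_top_of_subset hSK hK)
  rw [le_sub_iff_add_le, ← hunion]
  exact measureReal_mono (Set.union_subset hball hSK) hK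

section VolumeRadius

variable {E : Type*} [NormedAddCommGroup E] [NormedSpace ℝ E] [MeasurableSpace E]

/-- The volume radius of `v`: the radius of the balls of `μ`-measure `v`, for an additive Haar
measure `μ` on a nontrivial finite-dimensional space and `0 ≤ v`. -/
noncomputable def volumeRadius (μ : Measure E) (v : ℝ) : ℝ :=
  (v / μ.real (ball 0 1)) ^ (Module.finrank ℝ E : ℝ)⁻¹

variable [BorelSpace E] [FiniteDimensional ℝ E] [Nontrivial E]

theorem measureReal_ball_eq_pow_mul (μ : Measure E) [μ.IsAddHaarMeasure] (x : E) {r : ℝ}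
    (hr : 0 ≤ r) : μ.real (ball x r) = r ^ Module.finrank ℝ E * μ.real (ball 0 1) := by
  rw [measureReal_def, μ.addHaar_ball x hr, ENNReal.toReal_mul,
    ENNReal.toReal_ofReal (pow_nonneg hr _), measureReal_def]

variable {μ : Measure E} [μ.IsAddHaarMeasure]

theorem le_volumeRadius_of_measureReal_ball_le {x : E} {r v : ℝ} (hr : 0 ≤ r)
    (hv : μ.real (ball x r) ≤ v) : r ≤ volumeRadius μ v := by
  have hunit : 0 < μ.real (ball 0 1) :=
    ENNReal.toReal_pos (measure_ball_pos μ 0 one_pos).ne' measure_ball_lt_top.ne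
  have hpow : r ^ Module.finrank ℝ E ≤ v / μ.real (ball 0 1) := by
    rwa [le_div_iff₀ hunit, ← measureReal_ball_eq_pow_mul μ x hr]
  calc
    r = (r ^ Module.finrank ℝ E) ^ (Module.finrank ℝ E : ℝ)⁻¹ :=
      (Real.pow_rpow_inv_natCast hr Module.finrank_pos.ne').symm
    _ ≤ volumeRadius μ v := by unfold volumeRadius; gcongr

theorem infDist_le_Rv_of_unobstructed_general {S K : Set E} {q : E} (hSK : S ⊆ K)
    (hK : μ K ≠ ⊤) (hle : infDist q S ≤ infDist q Kᶜ) :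
    infDist q S ≤ volumeRadius μ (μ.real K - μ.real S) :=
  le_volumeRadius_of_measureReal_ball_le infDist_nonneg
    (measureReal_ball_infDist_le_sub hSK hK hle)

end VolumeRadius

theorem Rv_eq_volumeRadius (S : Set (EuclideanSpace ℝ (Fin 3))) :
    Rv S =
      volumeRadius (E := EuclideanSpace ℝ (Fin 3)) volume
        (volume.real (convexHull ℝ S) - volume.real S) := by
  have hunit : volume.real (ball (0 : EuclideanSpace ℝ (Fin 3)) 1) = 4 * Real.pi / 3 := by
    rw [measureReal_def, EuclideanSpace.volume_ball_fin_three, ENNReal.ofReal_one, one_pow,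
      one_mul, ENNReal.toReal_ofReal (by positivity), mul_comm Real.pi]
  rw [Rv, ← measureReal_def, ← measureReal_def, volumeRadius, hunit, finrank_euclideanSpace_fin,
    Nat.cast_ofNat, one_div, div_div_eq_mul_div, mul_comm (3 : ℝ)]

theorem infDist_le_Rv_of_unobstructed (S : Set (EuclideanSpace ℝ (Fin 3)))
    (hne : S.Nonempty) (hcomp : IsCompact S)
    (q : EuclideanSpace ℝ (Fin 3)) (hq : q ∈ convexHull ℝ S)
    (hle : Metric.infDist q S ≤ Metric.infDist q ((convexHull ℝ S)ᶜ)) :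
    Metric.infDist q S ≤ Rv S :=
  Rv_eq_volumeRadius S ▸ infDist_le_Rv_of_unobstructed_general (subset_convexHull ℝ S)
    (isBounded_convexHull.2 hcomp.isBounded).measure_lt_top.ne hle
end

section
/- Let E be a finite-dimensional real inner product space, let C ⊆ E be convex, let r > 0 and q ∈ E with Metric.closedBall q r ⊆ C, and let q₀ ∈ frontier C satisfy dist q q₀ = r. Then for every p ∈ C, the real inner product satisfies ⟪p − q₀, q − q₀⟫ ≥ 0. -/
open RealInnerProductSpace

/-!
If `⟪p - q₀, q - q₀⟫ < 0`, then the ray from `q₀` pointing away from `p` enters the open ball around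
`q` whose sphere passes through `q₀`. That ball lies in the interior of `C`, so `q₀` lies strictly
between an interior point of `C` and the point `p` of `C`. By convexity `q₀` is then itself an
interior point of `C`, whereas it was assumed to be on the boundary.
-/

section Convex

variable {𝕜 V : Type*} [Field 𝕜] [LinearOrder 𝕜] [IsStrictOrderedRing 𝕜]
  [AddCommGroup V] [Module 𝕜 V]

theorem mem_openSegment_sub_smul_sub {t : 𝕜} (ht : 0 < t) (x y : V) :
    x ∈ openSegment 𝕜 (x - t • (y - x)) y := by
  rw [mem_openSegment_iff_div]
  refine ⟨1, t, one_pos, ht, ?_⟩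
  have one_add_ne_zero : 1 + t ≠ 0 := by positivity
  match_scalars <;> field_simp <;> ring

theorem mem_interior_of_sub_smul_sub_mem_interior [TopologicalSpace V] [IsTopologicalAddGroup V]
    [ContinuousConstSMul 𝕜 V] {C : Set V} (hC : Convex 𝕜 C) {x y : V} {t : 𝕜} (ht : 0 < t)
    (hx : x - t • (y - x) ∈ interior C) (hy : y ∈ closure C) : x ∈ interior C :=
  hC.openSegment_interior_closure_subset_interior hx hy (mem_openSegment_sub_smul_sub ht x y)

end Convex

section InnerProductSpace

variable {E : Type*} [NormedAddCommGroup E] [InnerProductSpace ℝ E]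

theorem sub_smul_mem_ball_dist_iff {t : ℝ} (ht : 0 < t) (x c v : E) :
    x - t • v ∈ Metric.ball c (dist x c) ↔ ‖v‖ ^ 2 * t < 2 * ⟪v, x - c⟫ := by
  have norm_sq_expansion :
      ‖x - t • v - c‖ ^ 2 = ‖x - c‖ ^ 2 + t * (‖v‖ ^ 2 * t - 2 * ⟪v, x - c⟫) := by
    rw [sub_right_comm, norm_sub_sq_real, inner_smul_right, real_inner_comm, norm_smul, mul_pow,
      Real.norm_eq_abs, sq_abs]
    ring
  rw [Metric.mem_ball, dist_eq_norm, dist_eq_norm,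
    ← pow_lt_pow_iff_left₀ (norm_nonneg _) (norm_nonneg _) two_ne_zero, norm_sq_expansion,
    add_lt_iff_neg_left, ← smul_eq_mul, smul_neg_iff_of_pos_left ht, sub_neg]

theorem exists_pos_sub_smul_mem_ball_dist {x c v : E} (hv : 0 < ⟪v, x - c⟫) :
    ∃ t : ℝ, 0 < t ∧ x - t • v ∈ Metric.ball c (dist x c) := by
  obtain ⟨t, ht, hlt⟩ := exists_pos_mul_lt (mul_pos two_pos hv) (‖v‖ ^ 2)
  exact ⟨t, ht, (sub_smul_mem_ball_dist_iff ht x c v).2 hlt⟩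

theorem inner_nonneg_of_inscribed_ball_touching_general {C : Set E} (hC : Convex ℝ C) {q q₀ p : E}
    (hball : Metric.ball q (dist q₀ q) ⊆ C) (hq₀ : q₀ ∉ interior C) (hp : p ∈ closure C) :
    0 ≤ ⟪p - q₀, q - q₀⟫ := by
  by_contra! hneg
  have inner_pos : 0 < ⟪p - q₀, q₀ - q⟫ := by
    rwa [← neg_sub q q₀, inner_neg_right, neg_pos]
  obtain ⟨t, ht, hmem⟩ := exists_pos_sub_smul_mem_ball_dist inner_pos
  have mem_interior : q₀ - t • (p - q₀) ∈ interior C :=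
    interior_maximal hball Metric.isOpen_ball hmem
  exact hq₀ (mem_interior_of_sub_smul_sub_mem_interior hC ht mem_interior hp)

end InnerProductSpace

theorem inner_nonneg_of_inscribed_ball_touching {E : Type*} [NormedAddCommGroup E]
    [InnerProductSpace ℝ E] [FiniteDimensional ℝ E]
    (C : Set E) (hC : Convex ℝ C) (r : ℝ) (hr : 0 < r) (q : E)
    (hball : Metric.closedBall q r ⊆ C) (q₀ : E) (hq₀ : q₀ ∈ frontier C)
    (hd : dist q q₀ = r) :
    ∀ p ∈ C, 0 ≤ ⟪p - q₀, q - q₀⟫ := by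
  rw [← hd, dist_comm] at hball
  exact fun p hp => inner_nonneg_of_inscribed_ball_touching_general hC
    (Metric.ball_subset_closedBall.trans hball) hq₀.2 (subset_closure hp)
end

section
/- Let E be a finite-dimensional real inner product space, let C ⊆ E be convex, let r > 0 and q ∈ E with Metric.closedBall q r ⊆ C, and let q₀ ∈ frontier C satisfy dist q q₀ = r. Then for every p ∈ C, dist p q ≤ Real.sqrt (r² + (dist p q₀)²). -/
/-!
If the ray from `p ∈ C` through `q₀ ∉ interior C`, continued past `q₀`, met the interior of `C`,
convexity would put `q₀` in the interior as well. So the continuation avoids the inscribed ball, and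
`q₀` is its closest point to `q`. Hence the angle `∠ p q₀ q` is at most `π / 2`, and the law of
cosines yields the bound.
-/

open Filter Topology

theorem add_smul_sub_notMem_interior_of_convex {𝕜 V : Type*} [Field 𝕜] [LinearOrder 𝕜]
    [IsStrictOrderedRing 𝕜] [AddCommGroup V] [Module 𝕜 V] [TopologicalSpace V]
    [IsTopologicalAddGroup V] [ContinuousConstSMul 𝕜 V] {s : Set V} (hs : Convex 𝕜 s) {x y : V}
    (hx : x ∈ closure s) (hy : y ∉ interior s) {t : 𝕜} (ht : 0 ≤ t) :
    y + t • (y - x) ∉ interior s := by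
  intro hbeyond
  have hmem : (1 + t)⁻¹ ∈ Set.Ioc 0 1 :=
    ⟨by positivity, inv_le_one_of_one_le₀ (le_add_of_nonneg_right ht)⟩
  have hcombo : x + (1 + t)⁻¹ • (y + t • (y - x) - x) = y := by
    have hne : 1 + t ≠ 0 := by positivity
    have hsub : y + t • (y - x) - x = (1 + t) • (y - x) := by module
    rw [hsub, inv_smul_smul₀ hne, add_sub_cancel]
  exact hy (hcombo ▸ hs.add_smul_sub_mem_interior' hx hbeyond hmem)

section InnerProduct

variable {E : Type*} [SeminormedAddCommGroup E] [InnerProductSpace ℝ E]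

theorem real_inner_nonneg_of_forall_norm_le_norm_add_smul {v w : E}
    (h : ∀ t : ℝ, 0 < t → ‖v‖ ≤ ‖v + t • w‖) : 0 ≤ inner ℝ v w := by
  have hlower : ∀ t : ℝ, 0 < t → 0 ≤ 2 * inner ℝ v w + t * ‖w‖ ^ 2 := by
    intro t ht
    have hexpand : ‖v + t • w‖ ^ 2 = ‖v‖ ^ 2 + t * (2 * inner ℝ v w + t * ‖w‖ ^ 2) := by
      rw [norm_add_sq_real, real_inner_smul_right, norm_smul, mul_pow, Real.norm_eq_abs, sq_abs]
      ring
    have hsq : ‖v‖ ^ 2 ≤ ‖v + t • w‖ ^ 2 := by gcongr; exact h t ht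
    exact nonneg_of_mul_nonneg_right (by linarith) ht
  have hlim : Tendsto (fun t : ℝ ↦ 2 * inner ℝ v w + t * ‖w‖ ^ 2) (𝓝[>] 0)
      (𝓝 (2 * inner ℝ v w + 0 * ‖w‖ ^ 2)) :=
    (Continuous.tendsto (by fun_prop) 0).mono_left nhdsWithin_le_nhds
  have hzero := ge_of_tendsto hlim (eventually_mem_nhdsWithin.mono hlower)
  linarith

theorem real_inner_nonneg_of_ball_subset_convex {C : Set E} (hC : Convex ℝ C) {p q q₀ : E}
    (hball : Metric.ball q (dist q q₀) ⊆ C) (hq₀ : q₀ ∉ interior C) (hp : p ∈ closure C) :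
    0 ≤ inner ℝ (q - q₀) (p - q₀) := by
  refine real_inner_nonneg_of_forall_norm_le_norm_add_smul fun t ht ↦ ?_
  have houtside : q₀ + t • (q₀ - p) ∉ Metric.ball q (dist q q₀) := fun hx ↦
    add_smul_sub_notMem_interior_of_convex hC hp hq₀ ht.le
      (interior_maximal hball Metric.isOpen_ball hx)
  have hsub : q - (q₀ + t • (q₀ - p)) = (q - q₀) + t • (p - q₀) := by module
  rwa [Metric.mem_ball', not_lt, dist_eq_norm, dist_eq_norm, hsub] at houtside

theorem dist_le_sqrt_of_real_inner_nonneg {p q q₀ : E} (h : 0 ≤ inner ℝ (q - q₀) (p - q₀)) :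
    dist p q ≤ √(dist q q₀ ^ 2 + dist p q₀ ^ 2) := by
  apply Real.le_sqrt_of_sq_le
  calc dist p q ^ 2
      = ‖(q - q₀) - (p - q₀)‖ ^ 2 := by rw [sub_sub_sub_cancel_right, dist_comm, dist_eq_norm]
    _ = ‖q - q₀‖ ^ 2 - 2 * inner ℝ (q - q₀) (p - q₀) + ‖p - q₀‖ ^ 2 := norm_sub_sq_real _ _
    _ ≤ dist q q₀ ^ 2 + dist p q₀ ^ 2 := by rw [dist_eq_norm, dist_eq_norm]; linarith

theorem dist_le_sqrt_of_inscribed_ball_touching_general {C : Set E} (hC : Convex ℝ C) {r : ℝ}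
    {q q₀ : E} (hball : Metric.ball q r ⊆ C) (hq₀ : q₀ ∉ interior C) (hd : dist q q₀ = r)
    {p : E} (hp : p ∈ closure C) : dist p q ≤ √(r ^ 2 + dist p q₀ ^ 2) := by
  subst hd
  exact dist_le_sqrt_of_real_inner_nonneg
    (real_inner_nonneg_of_ball_subset_convex hC hball hq₀ hp)

end InnerProduct

theorem dist_le_sqrt_of_inscribed_ball_touching {E : Type*} [NormedAddCommGroup E]
    [InnerProductSpace ℝ E] [FiniteDimensional ℝ E]
    (C : Set E) (hC : Convex ℝ C) (r : ℝ) (hr : 0 < r) (q : E)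
    (hball : Metric.closedBall q r ⊆ C) (q₀ : E) (hq₀ : q₀ ∈ frontier C)
    (hd : dist q q₀ = r) :
    ∀ p ∈ C, dist p q ≤ Real.sqrt (r ^ 2 + (dist p q₀) ^ 2) :=
  fun _ hp ↦ dist_le_sqrt_of_inscribed_ball_touching_general hC
    (Metric.ball_subset_closedBall.trans hball) hq₀.2 hd (subset_closure hp)
end
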